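/- arXiv:2307.04161 — 2 statements merged into one kernel-verified Lean document; each statement's English description precedes it below -/
import Mathlib

section
/- Let Ω be a compact subset of ℝ^d with probability measure μ, X_N an N-dimensional subspace of C(Ω), 1 ≤ p < ∞, ξ = {ξ¹,…,ξ^m} ⊂ Ω, and w = (w_1,…,w_m) a positive weight. Assume: (A1) C₁‖u‖_{L_p(Ω,μ)} ≤ (Σ_{ν=1}^m w_ν|u(ξ^ν)|^p)^{1/p} for all u ∈ X_N with some constant C₁ > 0; (A2) Σ_{ν=1}^m w_ν ≤ C₂ for some C₂ > 0. Then for any f ∈ C(Ω): ‖f − ℓpw(ξ,X_N)(f)‖_{L_p(Ω,μ)} ≤ 2^{1/p}(2C₁^{−1}C₂^{1/p} + 1) d(f, X_N)_{L_p(Ω, μ_{w,ξ})}, where μ_{w,ξ} := (1/2)μ + (1/(2‖w‖₁))Σ_{j=1}^m w_j δ_{ξ^j}; and also ‖f − ℓpw(ξ,X_N)(f)‖_{L_p(Ω,μ)} ≤ (2C₁^{−1}C₂^{1/p} + 1) d(f, X_N)_∞. -/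
/-!
Near-optimality of weighted `ℓ_p` least squares recovery follows from the triangle inequality.
Let `A = ‖f - u‖_{L_p(μ)}` and `B = ‖S(f - u, ξ)‖_{p,w}` for an arbitrary `u ∈ X_N`. As
`u - u₀ ∈ X_N`, the discretization inequality and the minimality of `u₀` give
`‖f - u₀‖ ≤ A + ‖u - u₀‖ ≤ A + C₁⁻¹ ‖S(u - u₀, ξ)‖ ≤ A + 2 C₁⁻¹ B` (`recovery_bound`).
The weighted sample norm is itself the `L_p` norm of the discrete measure `∑ w_ν δ_{ξ^ν}`
(`lpN_discM`), so Minkowski's inequality `lpN_add_le` serves for both norms.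

The two estimates come from bounding `A` and `B`. Since `μ ≤ 2 μ_{w,ξ}` and
`∑ w_ν δ_{ξ^ν} ≤ 2 ‖w‖₁ μ_{w,ξ}`, both are controlled by the `L_p(μ_{w,ξ})` norm
(`lpN_le_wMix`, `discN_le_wMix`); and since `μ` has mass `1` and the discrete measure has mass at
most `C₂`, both are controlled by the uniform norm (`lpN_le_supN`). It remains to take the infimum
over `u`.
-/

open MeasureTheory Finset
open scoped ENNReal

noncomputable section

/-- The `L_p(μ)` norm (for finite `p`) of a function `f : α → ℂ`. -/
def lpN {α : Type*} [MeasurableSpace α] (μ : Measure α) (p : ℝ) (f : α → ℂ) : ℝ :=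
  (∫ x, ‖f x‖ ^ p ∂μ) ^ (1 / p)

/-- The uniform norm of `f`. -/
def supN {α : Type*} (f : α → ℂ) : ℝ := ⨆ x, ‖f x‖

/-- The discrete sample norm `‖S(f,ξ)‖_p = ((1/m) ∑_ν |f(ξ^ν)|^p)^(1/p)`. -/
def sampleN {α : Type*} {m : ℕ} (ξ : Fin m → α) (p : ℝ) (f : α → ℂ) : ℝ :=
  ((m : ℝ)⁻¹ * ∑ ν, ‖f (ξ ν)‖ ^ p) ^ (1 / p)

/-- `Σ_v(D_N)`: the set of `v`-term linear combinations of the system `φ`. -/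
def sparse {α : Type*} {N : ℕ} (φ : Fin N → α → ℂ) (v : ℕ) : Set (α → ℂ) :=
  {g | ∃ (s : Finset (Fin N)) (c : Fin N → ℂ), s.card ≤ v ∧ g = fun x => ∑ j ∈ s, c j * φ j x}

/-- `σ_v(f, D_N)`: the best `v`-term approximation error of `f` with respect to the
system `φ`, measured in the norm `nrm`. -/
def sigmaErr {α : Type*} {N : ℕ} (φ : Fin N → α → ℂ) (v : ℕ) (nrm : (α → ℂ) → ℝ)
    (f : α → ℂ) : ℝ :=
  ⨅ g ∈ sparse φ v, nrm (f - g)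

/-- `ξ` provides one-sided `L_p`-universal discretization with constant `D` for the
collection `𝒳_u(D_N)` of spans of `u` elements of `φ` (whose union is `Σ_u(D_N)`). -/
def UnivDisc {α : Type*} [MeasurableSpace α] (μ : Measure α) {N : ℕ} (φ : Fin N → α → ℂ)
    (u : ℕ) (p D : ℝ) {m : ℕ} (ξ : Fin m → α) : Prop :=
  ∀ g ∈ sparse φ u, lpN μ p g ≤ D * sampleN ξ p g

/-- The measure `μ_ξ = (1/2)μ + (1/(2m)) ∑_j δ_{ξ^j}`. -/
def mixM {α : Type*} [MeasurableSpace α] (μ : Measure α) {m : ℕ} (ξ : Fin m → α) :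
    Measure α :=
  (2 : ℝ≥0∞)⁻¹ • μ + (2 * m : ℝ≥0∞)⁻¹ • ∑ j, Measure.dirac (ξ j)

/-- A run of the Weak Chebyshev Greedy Algorithm with weakness parameter `t`, applied to
`f0` with respect to the system `φ`, in the (semi)normed space of functions with norm `nrm`:
`ψ` records the chosen elements, `G n` is the Chebyshev approximant after `n` steps
(so that the residual is `f0 - G n`). -/
def IsWCGARun {α : Type*} {N : ℕ} (t : ℝ) (nrm : (α → ℂ) → ℝ) (φ : Fin N → α → ℂ)
    (f0 : α → ℂ) (ψ : ℕ → Fin N) (G : ℕ → α → ℂ) : Prop :=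
  G 0 = 0 ∧
  ∀ n : ℕ,
    (∃ F : (α → ℂ) →ₗ[ℂ] ℂ,
      (∀ g, ‖F g‖ ≤ nrm g) ∧
      F (f0 - G n) = ((nrm (f0 - G n) : ℝ) : ℂ) ∧
      ∀ j, t * ‖F (φ j)‖ ≤ ‖F (φ (ψ (n + 1)))‖) ∧
    G (n + 1) ∈ Submodule.span ℂ ((fun i => φ (ψ i)) '' Set.Icc 1 (n + 1)) ∧
    ∀ h ∈ Submodule.span ℂ ((fun i => φ (ψ i)) '' Set.Icc 1 (n + 1)),
      nrm (f0 - G (n + 1)) ≤ nrm (f0 - h)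

/-- The measure `μ_{w,ξ} = (1/2)μ + (1/(2‖w‖₁)) ∑_j w_j δ_{ξ^j}`. -/
def wMix {α : Type*} [MeasurableSpace α] (μ : Measure α) {m : ℕ} (ξ : Fin m → α)
    (w : Fin m → ℝ) : Measure α :=
  (2 : ℝ≥0∞)⁻¹ • μ + ∑ j, ENNReal.ofReal (w j / (2 * ∑ ν, w ν)) • Measure.dirac (ξ j)

section Helpers

variable {α : Type*} [MeasurableSpace α]

/-- The discrete measure `∑ w_ν δ_{ξ^ν}`, whose `L_p` norm is the weighted sample norm when the
weights are nonnegative; negative weights are truncated to `0`. -/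
def discM {m : ℕ} (ξ : Fin m → α) (w : Fin m → ℝ) : Measure α :=
  ∑ j, ENNReal.ofReal (w j) • Measure.dirac (ξ j)

instance {m : ℕ} (ξ : Fin m → α) (w : Fin m → ℝ) : IsFiniteMeasure (discM ξ w) := by
  refine ⟨?_⟩
  simp [discM, Measure.finsetSum_apply]

lemma lpN_sub_comm (ν : Measure α) (p : ℝ) (g h : α → ℂ) :
    lpN ν p (g - h) = lpN ν p (h - g) := by
  simp [lpN, norm_sub_rev]

/-- Passes from a comparison of integrals of `p`-th powers to one of `L_p` norms. -/
lemma rpow_bound {p : ℝ} (hp : 1 ≤ p) {a b c : ℝ} (ha : 0 ≤ a) (hb : 0 ≤ b) (hc : 0 ≤ c)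
    (h : a ≤ c * b) : a ^ (1 / p) ≤ c ^ (1 / p) * b ^ (1 / p) := by
  rw [← Real.mul_rpow hc hb]
  exact Real.rpow_le_rpow ha h (by positivity)

variable [TopologicalSpace α] [CompactSpace α] [BorelSpace α]

lemma integrable_of_cont (ν : Measure α) [IsFiniteMeasure ν] {g : α → ℝ} (hg : Continuous g) :
    Integrable g ν :=
  hg.integrable_of_hasCompactSupport (HasCompactSupport.of_compactSpace g)

lemma cont_pow {β : Type*} [TopologicalSpace β] {p : ℝ} (hp : 1 ≤ p) {g : β → ℂ} (hg : Continuous g) :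
    Continuous fun x => ‖g x‖ ^ p :=
  hg.norm.rpow_const fun _ => Or.inr (by linarith)

lemma memLp_of_cont (ν : Measure α) [IsFiniteMeasure ν] {p : ℝ≥0∞} {g : α → ℂ}
    (hg : Continuous g) : MemLp g p ν :=
  hg.memLp_of_hasCompactSupport (HasCompactSupport.of_compactSpace g)

lemma lpN_eq (ν : Measure α) [IsFiniteMeasure ν] {p : ℝ} (hp : 1 ≤ p) {g : α → ℂ}
    (hg : Continuous g) : lpN ν p g = (eLpNorm g (ENNReal.ofReal p) ν).toReal := by
  have hp0 : 0 < p := by linarith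
  rw [(memLp_of_cont ν hg).eLpNorm_eq_integral_rpow_norm (by simpa using hp0)
    ENNReal.ofReal_ne_top, ENNReal.toReal_ofReal hp0.le, ENNReal.toReal_ofReal (by positivity)]
  simp [lpN]

/-- Minkowski's inequality. -/
lemma lpN_add_le (ν : Measure α) [IsFiniteMeasure ν] {p : ℝ} (hp : 1 ≤ p) {g h : α → ℂ}
    (hg : Continuous g) (hh : Continuous h) : lpN ν p (g + h) ≤ lpN ν p g + lpN ν p h := by
  have hgt := (memLp_of_cont ν hg (p := ENNReal.ofReal p)).eLpNorm_ne_top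
  have hht := (memLp_of_cont ν hh (p := ENNReal.ofReal p)).eLpNorm_ne_top
  rw [lpN_eq ν hp hg, lpN_eq ν hp hh, lpN_eq ν hp (hg.add hh), ← ENNReal.toReal_add hgt hht]
  refine ENNReal.toReal_mono (ENNReal.add_ne_top.2 ⟨hgt, hht⟩) ?_
  exact eLpNorm_add_le (memLp_of_cont ν hg (p := 1)).1 (memLp_of_cont ν hh (p := 1)).1
    (by simpa using ENNReal.ofReal_le_ofReal hp)

/-- The `L_p` norm is at most the total mass to the power `1/p` times the uniform norm. -/
lemma lpN_le_supN (ν : Measure α) [IsFiniteMeasure ν] {p : ℝ} (hp : 1 ≤ p) {g : α → ℂ}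
    (hg : Continuous g) : lpN ν p g ≤ (ν.real Set.univ) ^ (1 / p) * supN g := by
  have hp0 : 0 < p := by linarith
  have hs : 0 ≤ supN g := Real.iSup_nonneg fun _ => norm_nonneg _
  have hle : ∀ x, ‖g x‖ ≤ supN g := fun x =>
    le_ciSup (isCompact_range hg.norm).bddAbove x
  have h1 : ∫ x, ‖g x‖ ^ p ∂ν ≤ ν.real Set.univ * supN g ^ p := by
    have := integral_mono (integrable_of_cont ν (cont_pow hp hg))
      (integrable_const (supN g ^ p)) fun x => Real.rpow_le_rpow (norm_nonneg _) (hle x) hp0.le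
    simpa using this
  have h2 := rpow_bound hp (integral_nonneg fun x => by positivity) (by positivity)
    measureReal_nonneg h1
  rwa [← Real.rpow_mul hs, mul_one_div_cancel hp0.ne', Real.rpow_one] at h2

lemma integral_discM {m : ℕ} (ξ : Fin m → α) {w : Fin m → ℝ} (hw : ∀ j, 0 ≤ w j) {g : α → ℝ}
    (hg : Continuous g) : ∫ x, g x ∂(discM ξ w) = ∑ j, w j * g (ξ j) := by
  have hm : StronglyMeasurable g := hg.measurable.stronglyMeasurable
  rw [discM, integral_finsetSum_measure fun j _ =>
    (integrable_of_cont (Measure.dirac (ξ j)) hg).smul_measure ENNReal.ofReal_ne_top]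
  refine Finset.sum_congr rfl fun j _ => ?_
  rw [integral_smul_measure, integral_dirac' g _ hm, ENNReal.toReal_ofReal (hw j), smul_eq_mul]

/-- The weighted sample norm is the `L_p` norm of the discrete measure. -/
lemma lpN_discM {m : ℕ} (ξ : Fin m → α) {w : Fin m → ℝ} (hw : ∀ j, 0 ≤ w j) {p : ℝ} (hp : 1 ≤ p)
    {g : α → ℂ} (hg : Continuous g) :
    lpN (discM ξ w) p g = (∑ j, w j * ‖g (ξ j)‖ ^ p) ^ (1 / p) := by
  rw [lpN, integral_discM ξ hw (cont_pow hp hg)]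

lemma discM_real_univ {m : ℕ} (ξ : Fin m → α) {w : Fin m → ℝ} (hw : ∀ j, 0 ≤ w j) :
    (discM ξ w).real Set.univ = ∑ j, w j := by
  simpa using integral_discM ξ hw (g := fun _ => 1) continuous_const

lemma integral_wMix (μ : Measure α) [IsFiniteMeasure μ] {m : ℕ} (ξ : Fin m → α) {w : Fin m → ℝ}
    (hw : ∀ j, 0 ≤ w j) {g : α → ℝ} (hg : Continuous g) :
    ∫ x, g x ∂(wMix μ ξ w) =
      2⁻¹ * ∫ x, g x ∂μ + ∑ j, w j / (2 * ∑ ν, w ν) * g (ξ j) := by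
  have hS : 0 ≤ ∑ ν, w ν := Finset.sum_nonneg fun j _ => hw j
  have hw' : ∀ j, 0 ≤ w j / (2 * ∑ ν, w ν) := fun j => div_nonneg (hw j) (by positivity)
  rw [← integral_discM ξ hw' hg]
  change ∫ x, g x ∂((2 : ℝ≥0∞)⁻¹ • μ + discM ξ fun j => w j / (2 * ∑ ν, w ν)) = _
  rw [integral_add_measure ((integrable_of_cont μ hg).smul_measure (by simp))
    (integrable_of_cont _ hg), integral_smul_measure]
  simp

lemma lpN_le_wMix (μ : Measure α) [IsFiniteMeasure μ] {m : ℕ} (ξ : Fin m → α) {w : Fin m → ℝ}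
    (hw : ∀ j, 0 ≤ w j) {p : ℝ} (hp : 1 ≤ p) {g : α → ℂ} (hg : Continuous g) :
    lpN μ p g ≤ 2 ^ (1 / p) * lpN (wMix μ ξ w) p g := by
  have hS : 0 ≤ ∑ ν, w ν := Finset.sum_nonneg fun j _ => hw j
  refine rpow_bound hp (integral_nonneg fun x => by positivity)
    (integral_nonneg fun x => by positivity) zero_le_two ?_
  rw [integral_wMix μ ξ hw (cont_pow hp hg)]
  have : 0 ≤ ∑ j, w j / (2 * ∑ ν, w ν) * ‖g (ξ j)‖ ^ p :=
    Finset.sum_nonneg fun j _ => mul_nonneg (div_nonneg (hw j) (by positivity)) (by positivity)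
  linarith

lemma discN_le_wMix (μ : Measure α) [IsFiniteMeasure μ] {m : ℕ} (ξ : Fin m → α) {w : Fin m → ℝ}
    (hw : ∀ j, 0 < w j) {C p : ℝ} (hC : ∑ j, w j ≤ C) (hp : 1 ≤ p) {g : α → ℂ}
    (hg : Continuous g) :
    lpN (discM ξ w) p g ≤ C ^ (1 / p) * (2 ^ (1 / p) * lpN (wMix μ ξ w) p g) := by
  have hw0 : ∀ j, 0 ≤ w j := fun j => (hw j).le
  have hS : 0 ≤ ∑ ν, w ν := Finset.sum_nonneg fun j _ => hw0 j
  have hC0 : 0 ≤ C := hS.trans hC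
  rw [← mul_assoc, ← Real.mul_rpow hC0 zero_le_two]
  have hI : 0 ≤ ∫ x, ‖g x‖ ^ p ∂(wMix μ ξ w) := integral_nonneg fun x => by positivity
  refine rpow_bound hp (integral_nonneg fun x => by positivity) hI (by positivity) ?_
  refine le_trans ?_ (mul_le_mul_of_nonneg_right
    (mul_le_mul_of_nonneg_right hC zero_le_two) hI)
  rw [integral_wMix μ ξ hw0 (cont_pow hp hg), integral_discM ξ hw0 (cont_pow hp hg)]
  have h0 : 0 ≤ ∫ x, ‖g x‖ ^ p ∂μ := integral_nonneg fun x => by positivity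
  have h1 : ∑ j, w j * ‖g (ξ j)‖ ^ p =
      (∑ j, w j) * 2 * ∑ j, w j / (2 * ∑ ν, w ν) * ‖g (ξ j)‖ ^ p := by
    rw [Finset.mul_sum]
    refine Finset.sum_congr rfl fun j _ => ?_
    -- the existence of the index `j` makes the total weight, a denominator, nonzero
    have : 0 < ∑ ν, w ν := Finset.sum_pos (fun i _ => hw i) ⟨j, Finset.mem_univ j⟩
    field_simp
  rw [h1]
  refine mul_le_mul_of_nonneg_left ?_ (by positivity)
  linarith

/-- The error bound in terms of an arbitrary competitor `u`. The measure `ρ` stands for the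
discrete one: only the discretization inequality for `u - u₀` and the minimality of `u₀` against
`u` are needed. -/
lemma recovery_bound (μ ρ : Measure α) [IsFiniteMeasure μ] [IsFiniteMeasure ρ] {p C : ℝ}
    (hp : 1 ≤ p) (hC : 0 < C) {f u u₀ : α → ℂ} (hf : Continuous f) (hu : Continuous u)
    (hu₀ : Continuous u₀) (hA : C * lpN μ p (u - u₀) ≤ lpN ρ p (u - u₀))
    (hmin : lpN ρ p (f - u₀) ≤ lpN ρ p (f - u)) :
    lpN μ p (f - u₀) ≤ lpN μ p (f - u) + 2 * C⁻¹ * lpN ρ p (f - u) := by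
  have h1 : lpN μ p (f - u₀) ≤ lpN μ p (f - u) + lpN μ p (u - u₀) := by
    simpa using lpN_add_le μ hp (hf.sub hu) (hu.sub hu₀)
  have h2 : lpN ρ p (u - u₀) ≤ lpN ρ p (f - u) + lpN ρ p (f - u₀) := by
    rw [lpN_sub_comm ρ p f u]
    simpa using lpN_add_le ρ hp (hu.sub hf) (hf.sub hu₀)
  have h3 : lpN μ p (u - u₀) ≤ C⁻¹ * (2 * lpN ρ p (f - u)) := by
    rw [inv_mul_eq_div, le_div_iff₀ hC]
    linarith
  linarith

end Helpers

/-- **Theorem ubT2** (conditional theorem on recovery by weighted `ℓ_p` minimization):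
under the discretization assumption **A1** and the weight assumption **A2**, any output
`u₀` of the weighted `ℓ_p` minimization recovery operator `ℓpw(ξ, X_N)` satisfies the
stated error bounds. -/
theorem statement5
    (d : ℕ) (Ω : Set (EuclideanSpace ℝ (Fin d))) (hΩ : IsCompact Ω)
    (μ : Measure Ω) [IsProbabilityMeasure μ]
    (N : ℕ) (XN : Submodule ℂ (Ω → ℂ)) (hdim : Module.finrank ℂ XN = N)
    (hXc : ∀ f ∈ XN, Continuous f)
    (p : ℝ) (hp : 1 ≤ p)
    (m : ℕ) (ξ : Fin m → Ω) (w : Fin m → ℝ) (hw : ∀ ν, 0 < w ν)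
    (C₁ C₂ : ℝ) (hC₁ : 0 < C₁) (hC₂ : 0 < C₂)
    (hA1 : ∀ u ∈ XN, C₁ * lpN μ p u ≤ (∑ ν, w ν * ‖u (ξ ν)‖ ^ p) ^ (1 / p))
    (hA2 : ∑ ν, w ν ≤ C₂)
    (f : Ω → ℂ) (hf : Continuous f)
    (u₀ : Ω → ℂ) (hu₀ : u₀ ∈ XN)
    (hmin : ∀ u ∈ XN,
      (∑ ν, w ν * ‖(f - u₀) (ξ ν)‖ ^ p) ^ (1 / p) ≤
        (∑ ν, w ν * ‖(f - u) (ξ ν)‖ ^ p) ^ (1 / p)) :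
    lpN μ p (f - u₀) ≤
      (2 : ℝ) ^ (1 / p) * (2 * C₁⁻¹ * C₂ ^ (1 / p) + 1) *
        ⨅ u : XN, lpN (wMix μ ξ w) p (f - (u : Ω → ℂ)) ∧
    lpN μ p (f - u₀) ≤ (2 * C₁⁻¹ * C₂ ^ (1 / p) + 1) * ⨅ u : XN, supN (f - (u : Ω → ℂ)) := by
  have : CompactSpace Ω := isCompact_iff_compactSpace.1 hΩ
  have hw0 : ∀ j, 0 ≤ w j := fun j => (hw j).le
  have hS : 0 ≤ ∑ ν, w ν := Finset.sum_nonneg fun j _ => hw0 j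
  have hcu₀ := hXc u₀ hu₀
  have key : ∀ u : XN, lpN μ p (f - u₀) ≤
      lpN μ p (f - (u : Ω → ℂ)) + 2 * C₁⁻¹ * lpN (discM ξ w) p (f - (u : Ω → ℂ)) := by
    intro u
    have hu := hXc u u.2
    refine recovery_bound μ (discM ξ w) hp hC₁ hf hu hcu₀ ?_ ?_
    · rw [lpN_discM ξ hw0 hp (hu.sub hcu₀)]
      exact hA1 _ (XN.sub_mem u.2 hu₀)
    · rw [lpN_discM ξ hw0 hp (hf.sub hcu₀), lpN_discM ξ hw0 hp (hf.sub hu)]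
      exact hmin u u.2
  constructor
  · rw [Real.mul_iInf_of_nonneg (by positivity)]
    refine le_ciInf fun u => (key u).trans ?_
    have hg : Continuous (f - (u : Ω → ℂ)) := hf.sub (hXc u u.2)
    have h1 := lpN_le_wMix μ ξ hw0 hp hg
    have h2 := mul_le_mul_of_nonneg_left (discN_le_wMix μ ξ hw hA2 hp hg)
      (by positivity : 0 ≤ 2 * C₁⁻¹)
    linarith
  · rw [Real.mul_iInf_of_nonneg (by positivity)]
    refine le_ciInf fun u => (key u).trans ?_
    have hg : Continuous (f - (u : Ω → ℂ)) := hf.sub (hXc u u.2)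
    have hs : 0 ≤ supN (f - (u : Ω → ℂ)) := Real.iSup_nonneg fun _ => norm_nonneg _
    have h1 : lpN μ p (f - (u : Ω → ℂ)) ≤ supN (f - (u : Ω → ℂ)) := by
      simpa using lpN_le_supN μ hp hg
    have h2 : lpN (discM ξ w) p (f - (u : Ω → ℂ)) ≤ C₂ ^ (1 / p) * supN (f - (u : Ω → ℂ)) := by
      refine (lpN_le_supN (discM ξ w) hp hg).trans (mul_le_mul_of_nonneg_right ?_ hs)
      rw [discM_real_univ ξ hw0]
      exact Real.rpow_le_rpow hS hA2 (by positivity)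
    have h3 := mul_le_mul_of_nonneg_left h2 (by positivity : 0 ≤ 2 * C₁⁻¹)
    linarith

end
end

section
/- Let Λ_N = {k_1,…,k_N} be a lacunary sequence of positive integers: k_1 = 1 and k_{j+1} ≥ b k_j for some b > 1, j = 1,…,N−1. Suppose a finite set ξ = {ξ¹,…,ξ^m} ⊂ 𝕋 satisfies: for every trigonometric polynomial f ∈ 𝒯(Λ_N), ‖f‖_∞ ≤ L max_ν |f(ξ^ν)|. Then m ≥ (N/e)e^{CN/L²}, where C > 0 is a constant depending only on b. -/
open Finset

noncomputable section

/-!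
The bound `m ≥ (N / e) e ^ (C N / L²)` says that `N / L²` is at most a constant (depending on `b`)
times `log (e m / N)`. Two facts give it.

* `dim_le`: `m ≥ N`. Otherwise some nonzero coefficient vector gives a polynomial vanishing at all
  nodes, hence identically, against the linear independence of the exponentials. This makes
  `log (e m / N) ≥ 1`, so that multiplicative constants inside the logarithm are harmless.
* `large_ratio_bound`: keep every `r`-th frequency, where `b ^ r ≥ 4`; there remain `n ≥ N / r` of
  them. By `partial_coloring` there are real coefficients `u i` with `∑ |u i| ≥ n / 16` for which
  the polynomial has modulus at most a constant times `√(n log (128 m / n))` at every node. On the other hand `exists_phase` produces a point at which every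
  `u i * cos (k i * x)` is at least `|u i| / 2`, so the uniform norm is at least `n / 32`.
  Comparing the two through the hypothesis bounds `n / L²`.

The partial colouring gives `√(n log (C m / n))` rather than the `√(n log m)` of plain random signs;
this is what makes the factor `N / e` possible for all `L`. It comes from the subgaussian bound
`sum_exp_abs_le`, the lattice point count `card_int_vectors_le` and the pigeonhole principle.
-/

/-! ### Counting lattice points, signs and Hamming balls -/

lemma sum_pow_natAbs_le (y : ℝ) (hy0 : 0 ≤ y) (hy : y ≤ 1 / 2) (R : ℕ) :
    ∑ z ∈ Finset.Icc (-(R : ℤ)) R, y ^ z.natAbs + 4 * y ^ (R + 1) ≤ 1 + 4 * y := by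
  induction R with
  | zero => simp
  | succ R ih =>
    have hI : Finset.Icc (-((R + 1 : ℕ) : ℤ)) ((R + 1 : ℕ) : ℤ) =
        insert ((R : ℤ) + 1) (insert (-((R : ℤ) + 1)) (Finset.Icc (-(R : ℤ)) R)) := by
      ext z; simp only [Finset.mem_Icc, Finset.mem_insert]; push_cast; omega
    rw [hI, Finset.sum_insert, Finset.sum_insert]
    · have h1 : ((R : ℤ) + 1).natAbs = R + 1 := by omega
      have h2 : (-((R : ℤ) + 1)).natAbs = R + 1 := by omega
      rw [h1, h2, pow_succ y (R + 1)]
      have : 0 ≤ y ^ (R + 1) := pow_nonneg hy0 _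
      nlinarith
    · simp only [Finset.mem_Icc]; omega
    · simp only [Finset.mem_Icc, Finset.mem_insert]; omega

/-- There are at most `e ^ (s D + 4 M e ^ (-s))` integer vectors of `ℓ₁` norm at most `D`
in dimension `M`. -/
lemma card_int_vectors_le {ι : Type*} [Fintype ι] (S : Finset (ι → ℤ)) (s D : ℝ)
    (hs : 0 ≤ s) (hs2 : Real.exp (-s) ≤ 1 / 2)
    (hS : ∀ b ∈ S, (∑ v, ((b v).natAbs : ℝ)) ≤ D) :
    (S.card : ℝ) ≤ Real.exp (s * D + 4 * Fintype.card ι * Real.exp (-s)) := by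
  classical
  set y := Real.exp (-s) with hy
  have hy0 : 0 < y := Real.exp_pos _
  have hsub : S ⊆ Fintype.piFinset (fun _ : ι => Finset.Icc (-(⌈D⌉₊ : ℤ)) ⌈D⌉₊) := by
    intro b hb
    rw [Fintype.mem_piFinset]
    intro v
    have h1 : ((b v).natAbs : ℝ) ≤ ⌈D⌉₊ :=
      ((Finset.single_le_sum (f := fun v => ((b v).natAbs : ℝ))
        (fun _ _ => Nat.cast_nonneg _) (Finset.mem_univ v)).trans (hS b hb)).trans (Nat.le_ceil D)
    have h2 : (b v).natAbs ≤ ⌈D⌉₊ := by exact_mod_cast h1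
    rw [Finset.mem_Icc]; omega
  have h1 : (S.card : ℝ) * Real.exp (-(s * D)) ≤
      ∑ b ∈ S, ∏ v, y ^ (b v).natAbs := by
    rw [← nsmul_eq_mul]
    refine Finset.card_nsmul_le_sum _ _ _ fun b hb => ?_
    rw [Finset.prod_pow_eq_pow_sum, hy, ← Real.exp_nat_mul]
    refine Real.exp_le_exp.2 ?_
    have := hS b hb
    push_cast
    nlinarith
  have h2 : ∑ b ∈ S, ∏ v, y ^ (b v).natAbs ≤ (1 + 4 * y) ^ Fintype.card ι := by
    refine (Finset.sum_le_sum_of_subset_of_nonneg hsub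
      fun b _ _ => Finset.prod_nonneg fun v _ => pow_nonneg hy0.le _).trans ?_
    rw [← Finset.prod_univ_sum (fun _ : ι => Finset.Icc (-(⌈D⌉₊ : ℤ)) ⌈D⌉₊)
      (fun _ z => y ^ z.natAbs), Finset.prod_const, Finset.card_univ]
    refine pow_le_pow_left₀ (Finset.sum_nonneg fun _ _ => pow_nonneg hy0.le _) ?_ _
    have := sum_pow_natAbs_le y hy0.le hs2 ⌈D⌉₊
    have := pow_nonneg hy0.le (⌈D⌉₊ + 1)
    linarith
  have h3 : (1 + 4 * y) ^ Fintype.card ι ≤ Real.exp (4 * Fintype.card ι * y) := by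
    have : 1 + 4 * y ≤ Real.exp (4 * y) := by linarith [Real.add_one_le_exp (4 * y)]
    refine (pow_le_pow_left₀ (by positivity) this _).trans ?_
    rw [← Real.exp_nat_mul]
    exact Real.exp_le_exp.2 (by linarith)
  have h4 := h1.trans (h2.trans h3)
  rw [Real.exp_add]
  have h5 : Real.exp (s * D) * Real.exp (-(s * D)) = 1 := by
    rw [← Real.exp_add]; simp
  calc (S.card : ℝ) = Real.exp (s * D) * (S.card * Real.exp (-(s * D))) := by
        linear_combination (-(S.card : ℝ)) * h5
    _ ≤ _ := by gcongr

/-- The sign attached to a Boolean: `1` for `true` and `-1` for `false`. -/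
def boolSign (e : Bool) : ℝ := if e then 1 else -1

lemma sum_exp_le {n : ℕ} (a : Fin n → ℝ) (ha : ∀ j, |a j| ≤ 1) (t : ℝ) :
    ∑ e : Fin n → Bool, Real.exp (t * ∑ j, a j * boolSign (e j)) ≤
      2 ^ n * Real.exp (n * t ^ 2 / 2) := by
  have h1 : ∀ e : Fin n → Bool, Real.exp (t * ∑ j, a j * boolSign (e j)) =
      ∏ j, Real.exp (t * (a j * boolSign (e j))) := by
    intro e; rw [Finset.mul_sum, Real.exp_sum]
  simp_rw [h1]
  rw [← Fintype.piFinset_univ, ← Finset.prod_univ_sum (fun _ : Fin n => (Finset.univ : Finset Bool))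
    (fun j b => Real.exp (t * (a j * boolSign b)))]
  calc _ ≤ ∏ j : Fin n, 2 * Real.exp (t ^ 2 / 2) := by
        refine Finset.prod_le_prod (fun _ _ => Finset.sum_nonneg fun _ _ => (Real.exp_pos _).le) ?_
        intro j _
        have h2 := Real.cosh_le_exp_half_sq (t * a j)
        rw [Real.cosh_eq] at h2
        have h3 : (t * a j) ^ 2 ≤ t ^ 2 := by
          rw [mul_pow]
          have : a j ^ 2 ≤ 1 := by rw [← sq_abs]; nlinarith [ha j, abs_nonneg (a j)]
          nlinarith [sq_nonneg t]
        have h4 : Real.exp ((t * a j) ^ 2 / 2) ≤ Real.exp (t ^ 2 / 2) :=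
          Real.exp_le_exp.2 (by linarith)
        simp only [Fintype.sum_bool, boolSign]
        simp only [if_true, mul_one]
        norm_num
        linarith
    _ = _ := by
        rw [Finset.prod_const, Finset.card_univ, Fintype.card_fin, mul_pow, ← Real.exp_nat_mul]
        congr 2; ring

lemma sum_exp_abs_le {n : ℕ} (a : Fin n → ℝ) (ha : ∀ j, |a j| ≤ 1) (t : ℝ) :
    ∑ e : Fin n → Bool, Real.exp (t * |∑ j, a j * boolSign (e j)|) ≤
      2 * (2 ^ n * Real.exp (n * t ^ 2 / 2)) := by
  have h1 := sum_exp_le a ha t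
  have h2 := sum_exp_le a ha (-t)
  rw [neg_sq] at h2
  have h3 : ∑ e : Fin n → Bool, Real.exp (t * |∑ j, a j * boolSign (e j)|) ≤
      ∑ e : Fin n → Bool, (Real.exp (t * ∑ j, a j * boolSign (e j)) +
        Real.exp (-t * ∑ j, a j * boolSign (e j))) := by
    refine Finset.sum_le_sum fun e _ => ?_
    rcases abs_cases (∑ j, a j * boolSign (e j)) with ⟨h, _⟩ | ⟨h, _⟩ <;> rw [h]
    · linarith [Real.exp_pos (-t * ∑ j, a j * boolSign (e j))]
    · rw [mul_neg, ← neg_mul]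
      linarith [Real.exp_pos (t * ∑ j, a j * boolSign (e j))]
  rw [Finset.sum_add_distrib] at h3
  linarith

/-- Rounding at scale `2 l` sends `|x| < l` to zero, so an exponential moment controls the size
of the rounded value. -/
lemma natAbs_round_le (x : ℝ) (l : ℝ) (hl : 1 ≤ l) :
    ((round (x / (2 * l))).natAbs : ℝ) ≤ Real.exp (l * |x| - l ^ 2) := by
  set b := round (x / (2 * l)) with hb
  by_cases h0 : b = 0
  · rw [h0]; simpa using (Real.exp_pos _).le
  have h1 : (1 : ℝ) ≤ (b.natAbs : ℝ) := by
    exact_mod_cast Nat.one_le_iff_ne_zero.2 (Int.natAbs_ne_zero.2 h0)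
  have h2 : (b.natAbs : ℝ) = |(b : ℝ)| := by
    rw [Nat.cast_natAbs, Int.cast_abs]
  have h3 := abs_sub_round (x / (2 * l))
  rw [← hb, abs_sub_comm] at h3
  have h4 : |(b : ℝ)| - |x / (2 * l)| ≤ 1 / 2 := (abs_sub_abs_le_abs_sub _ _).trans h3
  have h5 : |x / (2 * l)| = |x| / (2 * l) := by
    rw [abs_div, abs_of_pos (by linarith : 0 < 2 * l)]
  have h6 : |x| / (2 * l) * (2 * l) = |x| := div_mul_cancel₀ _ (by linarith)
  rw [h5, ← h2] at h4
  -- the rounding error is at most half of the nonzero integer `b`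
  have h7 : (b.natAbs : ℝ) * l ≤ |x| := by nlinarith
  have h8 := Real.add_one_le_exp ((b.natAbs : ℝ) - 1)
  refine le_trans (by linarith) (h8.trans (Real.exp_le_exp.2 ?_))
  nlinarith [mul_nonneg (sub_nonneg.2 h1) (by nlinarith : (0:ℝ) ≤ l ^ 2 - 1),
    mul_le_mul_of_nonneg_left h7 (by linarith : 0 ≤ l)]

/-- A Hamming ball of radius `n / 16` in `{0,1}ⁿ` has at most `(e ^ (1/8) * 8/7) ^ n` points. -/
lemma card_hamming_ball_le {n : ℕ} (S : Finset (Fin n → Bool)) (e₀ : Fin n → Bool)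
    (hS : ∀ e ∈ S, ((Finset.univ.filter fun j => e j ≠ e₀ j).card : ℝ) ≤ n / 16) :
    (S.card : ℝ) ≤ Real.exp (n / 8) * (8 / 7) ^ n := by
  have h1 : (S.card : ℝ) * Real.exp (-(n / 8)) ≤
      ∑ e ∈ S, ∏ j, (if e j ≠ e₀ j then Real.exp (-2) else 1) := by
    rw [← nsmul_eq_mul]
    refine Finset.card_nsmul_le_sum _ _ _ fun e he => ?_
    rw [Finset.prod_ite, Finset.prod_const, Finset.prod_const_one, mul_one, ← Real.exp_nat_mul]
    refine Real.exp_le_exp.2 ?_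
    have := hS e he
    linarith
  have h2 : ∑ e ∈ S, ∏ j, (if e j ≠ e₀ j then Real.exp (-2) else 1) ≤ (8 / 7 : ℝ) ^ n := by
    refine (Finset.sum_le_sum_of_subset_of_nonneg (Finset.subset_univ S) fun e _ _ =>
      Finset.prod_nonneg fun j _ => by split_ifs <;> positivity).trans ?_
    rw [← Fintype.piFinset_univ, ← Finset.prod_univ_sum
      (fun _ : Fin n => (Finset.univ : Finset Bool))
      (fun j b => if b ≠ e₀ j then Real.exp (-2) else 1)]
    calc _ ≤ ∏ j : Fin n, (8 / 7 : ℝ) := by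
          refine Finset.prod_le_prod (fun _ _ => Finset.sum_nonneg fun _ _ => by
            split_ifs <;> positivity) ?_
          intro j _
          have h3 : Real.exp (-2) ≤ 1 / 7 := by
            rw [Real.exp_neg, inv_eq_one_div]
            refine one_div_le_one_div_of_le (by norm_num) ?_
            have : Real.exp 2 = Real.exp 1 * Real.exp 1 := by rw [← Real.exp_add]; norm_num
            nlinarith [Real.exp_one_gt_d9]
          cases e₀ j <;> simp <;> linarith
      _ = _ := by rw [Finset.prod_const, Finset.card_univ, Fintype.card_fin]
  have h3 := h1.trans h2
  have h5 : Real.exp (n / 8) * Real.exp (-(n / 8 : ℝ)) = 1 := by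
    rw [← Real.exp_add]; simp
  calc (S.card : ℝ) = Real.exp (n / 8) * (S.card * Real.exp (-(n / 8))) := by
        linear_combination (-(S.card : ℝ)) * h5
    _ ≤ _ := by gcongr

/-! ### Partial colouring -/

/-- Spencer's partial colouring, by counting: the signs `e` are classified by the rounded values
of the linear forms; for most signs this rounded vector has small `ℓ₁` norm, so few classes
occur, and one of them must contain two signs at large Hamming distance. Half their difference
is `u`. -/
lemma partial_coloring {n : ℕ} (hn : 0 < n) {ι : Type*} [Fintype ι]
    (hM : n ≤ Fintype.card ι) (a : ι → Fin n → ℝ) (ha : ∀ v j, |a v j| ≤ 1) :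
    ∃ u : Fin n → ℝ, (n : ℝ) / 16 ≤ ∑ j, |u j| ∧
      ∀ v, |∑ j, a v j * u j| ≤ √(6 * n * Real.log (64 * Fintype.card ι / n)) := by
  classical
  set M : ℝ := ((Fintype.card ι : ℕ) : ℝ) with hMdef
  have hn' : (0 : ℝ) < n := by exact_mod_cast hn
  have hMn : (n : ℝ) ≤ M := Nat.cast_le.2 hM
  have hMpos : 0 < M := by linarith
  set s := Real.log (64 * M / n) with hs
  have hes : Real.exp s = 64 * M / n := Real.exp_log (by positivity)
  set y := Real.exp (-s) with hy
  have hy0 : 0 < y := Real.exp_pos _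
  have hy1 : y * Real.exp s = 1 := by rw [hy, ← Real.exp_add]; simp
  have hny : (n : ℝ) = 64 * M * y := by
    rw [hes] at hy1; field_simp at hy1; linarith
  have hy2 : y ≤ 1 / 64 := by nlinarith
  have hs1 : 1 ≤ s := by
    have h64 : (64 : ℝ) ≤ Real.exp s := by rw [hes, le_div_iff₀ hn']; linarith
    refine Real.exp_le_exp.1 ?_
    linarith [Real.exp_one_lt_d9]
  have hsy : s * y ≤ 1 := by
    nlinarith [Real.add_one_le_exp s]
  set l := √(6 * s) with hl
  have hl2 : l ^ 2 = 6 * s := Real.sq_sqrt (by linarith)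
  have hl1 : 1 ≤ l := Real.one_le_sqrt.2 (by linarith)
  set X : ι → (Fin n → Bool) → ℝ := fun v e => ∑ j, a v j * boolSign (e j) with hX
  set b : (Fin n → Bool) → ι → ℤ := fun e v => round (X v e / √n / (2 * l)) with hb
  have hsq : √(n : ℝ) ^ 2 = n := Real.sq_sqrt hn'.le
  have hsqpos : 0 < √(n : ℝ) := Real.sqrt_pos.2 hn'
  -- the total `ℓ₁` norm of the rounded vectors, by the subgaussian bound at `t = l / √n`
  have hT : ∑ e, ∑ v, ((b e v).natAbs : ℝ) ≤ 2 * M * 2 ^ n * y ^ 3 := by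
    rw [Finset.sum_comm]
    have h1 : ∀ v, ∑ e, ((b e v).natAbs : ℝ) ≤ 2 * 2 ^ n * y ^ 3 := by
      intro v
      have h2 := sum_exp_abs_le (a v) (ha v) (l / √n)
      calc ∑ e, ((b e v).natAbs : ℝ)
          ≤ ∑ e : Fin n → Bool,
              Real.exp (l / √n * |∑ j, a v j * boolSign (e j)|) * Real.exp (-l ^ 2) := by
            refine Finset.sum_le_sum fun e _ => ?_
            refine (natAbs_round_le (X v e / √n) l hl1).trans (le_of_eq ?_)
            rw [← Real.exp_add, abs_div, abs_of_pos hsqpos]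
            congr 1; simp only [hX]; ring
        _ ≤ 2 * (2 ^ n * Real.exp (n * (l / √n) ^ 2 / 2)) * Real.exp (-l ^ 2) := by
            rw [← Finset.sum_mul]; gcongr
        _ = 2 * 2 ^ n * y ^ 3 := by
            have h3 : (n : ℝ) * (l / √n) ^ 2 / 2 = 3 * s := by
              rw [div_pow, hsq, hl2]; field_simp; norm_num
            have h4 : Real.exp (3 * s) * Real.exp (-l ^ 2) = y ^ 3 := by
              rw [hl2, ← Real.exp_add, hy, ← Real.exp_nat_mul]; congr 1; push_cast; ring
            rw [h3, ← h4]; ring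
    refine (Finset.sum_le_sum fun v _ => h1 v).trans (le_of_eq ?_)
    rw [Finset.sum_const, Finset.card_univ, nsmul_eq_mul]; ring
  set D : ℝ := n / (16 * s) with hD
  have hDpos : 0 < D := by positivity
  have hsD : s * D = n / 16 := by rw [hD]; field_simp
  set G : Finset (Fin n → Bool) :=
    Finset.univ.filter fun e => ∑ v, ((b e v).natAbs : ℝ) ≤ D with hG
  set B : Finset (Fin n → Bool) :=
    Finset.univ.filter fun e => ¬ ∑ v, ((b e v).natAbs : ℝ) ≤ D with hB
  have hGB : (G.card : ℝ) + B.card = 2 ^ n := by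
    have := Finset.card_filter_add_card_filter_not (s := (Finset.univ : Finset (Fin n → Bool)))
      (fun e => ∑ v, ((b e v).natAbs : ℝ) ≤ D)
    rw [Finset.card_univ, Fintype.card_fun, Fintype.card_bool, Fintype.card_fin] at this
    rw [← Nat.cast_add, hG, hB, this]; norm_num
  -- Markov: at most a quarter of the signs have a rounded vector of norm above `D`
  have hBD : (B.card : ℝ) * D ≤ 2 * M * 2 ^ n * y ^ 3 := by
    refine le_trans ?_ hT
    refine le_trans ?_ (Finset.sum_le_sum_of_subset_of_nonneg (Finset.subset_univ B)
      fun e _ _ => Finset.sum_nonneg fun v _ => Nat.cast_nonneg _)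
    rw [← nsmul_eq_mul]
    refine Finset.card_nsmul_le_sum _ _ _ fun e he => ?_
    exact (not_le.1 (Finset.mem_filter.1 he).2).le
  have hBcard : (B.card : ℝ) ≤ 2 ^ n / 4 := by
    have h1 : (B.card : ℝ) * (n / 16) ≤ 2 * M * 2 ^ n * y ^ 3 * s := by
      rw [← hsD]; nlinarith
    rw [hny] at h1
    have h2 : (B.card : ℝ) * (4 * (M * y)) ≤ (2 * 2 ^ n * (s * y) * y) * (M * y) := by
      nlinarith
    have h3 : 0 < M * y := by positivity
    have h4 : (B.card : ℝ) * 4 ≤ 2 * 2 ^ n * (s * y) * y := by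
      refine le_of_mul_le_mul_right ?_ h3; linarith
    have h5 : 2 * 2 ^ n * (s * y) * y ≤ 2 * 2 ^ n * 1 * (1 / 64 : ℝ) := by gcongr
    have h6 : (0 : ℝ) < 2 ^ n := by positivity
    linarith
  have himg : ((G.image b).card : ℝ) ≤ Real.exp (n / 8) := by
    have h1 := card_int_vectors_le (G.image b) s D (by linarith) (by rw [← hy]; linarith) ?_
    · refine h1.trans (Real.exp_le_exp.2 ?_)
      rw [hsD, ← hy, ← hMdef]
      linarith
    · intro c hc
      obtain ⟨e, he, rfl⟩ := Finset.mem_image.1 hc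
      exact (Finset.mem_filter.1 he).2
  -- otherwise every class lies in a Hamming ball of radius `n / 16`, and the classes cannot cover
  -- three quarters of the cube
  obtain ⟨e, e', hbe, hdist⟩ : ∃ e e' : Fin n → Bool, b e = b e' ∧
      (n : ℝ) / 16 < ((Finset.univ.filter fun j => e j ≠ e' j).card : ℝ) := by
    by_contra! hcon
    have h1 : (G.card : ℝ) ≤ (G.image b).card * (Real.exp (n / 8) * (8 / 7) ^ n) := by
      rw [Finset.card_eq_sum_card_image b G]
      push_cast
      rw [← nsmul_eq_mul]
      refine Finset.sum_le_card_nsmul _ _ _ fun c hc => ?_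
      obtain ⟨e₀, he₀, rfl⟩ := Finset.mem_image.1 hc
      exact card_hamming_ball_le _ e₀ fun e he => hcon e e₀ (Finset.mem_filter.1 he).2
    have h2 : (G.card : ℝ) ≤ Real.exp (n / 8) * (Real.exp (n / 8) * (8 / 7) ^ n) :=
      h1.trans (by gcongr)
    have h3 : Real.exp (n / 8) * (Real.exp (n / 8) * (8 / 7) ^ n) =
        (Real.exp (1 / 4) * (8 / 7)) ^ n := by
      rw [mul_pow, ← Real.exp_nat_mul, ← mul_assoc, ← Real.exp_add]; congr 2; ring
    have h4 : Real.exp (1 / 4) ≤ 1.3 := by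
      have h : Real.exp (1 / 4) ^ 4 = Real.exp 1 := by
        rw [← Real.exp_nat_mul]; congr 1; norm_num
      by_contra! hlt
      have := pow_lt_pow_left₀ hlt (by norm_num) (by norm_num : 4 ≠ 0)
      rw [h] at this
      norm_num at this
      linarith [Real.exp_one_lt_d9]
    have h5 : (Real.exp (1 / 4) * (8 / 7)) ^ n < (3 / 2 : ℝ) ^ n := by
      refine pow_lt_pow_left₀ ?_ (by positivity) hn.ne'
      norm_num at h4 ⊢
      linarith
    have h6 : (3 / 4 : ℝ) * 2 ^ n ≥ (3 / 2) ^ n := by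
      have h : (3 / 4 : ℝ) ^ n ≤ 3 / 4 :=
        pow_le_of_le_one (by norm_num) (by norm_num) hn.ne'
      calc (3 / 2 : ℝ) ^ n = (3 / 4) ^ n * 2 ^ n := by rw [← mul_pow]; norm_num
        _ ≤ _ := by gcongr
    rw [h3] at h2
    linarith
  refine ⟨fun j => (boolSign (e j) - boolSign (e' j)) / 2, ?_, fun v => ?_⟩
  · refine hdist.le.trans (le_of_eq ?_)
    rw [Finset.card_filter]
    push_cast
    refine Finset.sum_congr rfl fun j _ => ?_
    cases e j <;> cases e' j <;> norm_num [boolSign]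
  · have h1 : ∑ j, a v j * ((boolSign (e j) - boolSign (e' j)) / 2) = (X v e - X v e') / 2 := by
      simp only [hX]
      rw [← Finset.sum_sub_distrib, Finset.sum_div]
      exact Finset.sum_congr rfl fun j _ => by ring
    have h2 : √(6 * n * s) = l * √n := by
      rw [hl, ← Real.sqrt_mul (by linarith)]; congr 1; ring
    rw [h1, h2]
    have h3 := abs_sub_round (X v e / √n / (2 * l))
    have h4 := abs_sub_round (X v e' / √n / (2 * l))
    have h5 : round (X v e / √n / (2 * l)) = round (X v e' / √n / (2 * l)) := congrFun hbe v
    rw [h5] at h3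
    have h6 : |X v e / √n / (2 * l) - X v e' / √n / (2 * l)| ≤ 1 := by
      rw [abs_le] at *; constructor <;> linarith [h3.1, h3.2, h4.1, h4.2]
    have h7 : (X v e - X v e') / 2 =
        (X v e / √n / (2 * l) - X v e' / √n / (2 * l)) * (l * √n) := by
      field_simp
    have h8 : 0 < l * √(n : ℝ) := by positivity
    rw [h7, abs_mul, abs_of_pos h8]
    nlinarith

/-! ### Trigonometric polynomials -/

lemma exists_phase_one (κ θ y : ℝ) (hκ : 0 < κ) :
    ∃ y', |y' - y| ≤ Real.pi / κ ∧
      ∀ x, |x - y'| ≤ Real.pi / (3 * κ) → 1 / 2 ≤ Real.cos (κ * x - θ) := by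
  have hpi := Real.pi_pos
  set l := round ((κ * y - θ) / (2 * Real.pi)) with hl
  have h1 := abs_sub_round ((κ * y - θ) / (2 * Real.pi))
  rw [← hl] at h1
  refine ⟨(θ + l * (2 * Real.pi)) / κ, ?_, fun x hx => ?_⟩
  · have h2 : (θ + l * (2 * Real.pi)) / κ - y =
        -(((κ * y - θ) / (2 * Real.pi) - l) * (2 * Real.pi / κ)) := by field_simp; ring
    rw [h2, abs_neg, abs_mul, abs_of_pos (by positivity : 0 < 2 * Real.pi / κ)]
    calc _ ≤ 1 / 2 * (2 * Real.pi / κ) := by gcongr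
      _ = _ := by ring
  · have h2 : κ * x - θ = κ * (x - (θ + l * (2 * Real.pi)) / κ) + l * (2 * Real.pi) := by
      field_simp; ring
    rw [h2, Real.cos_add_int_mul_two_pi, ← Real.cos_abs, abs_mul, abs_of_pos hκ,
      ← Real.cos_pi_div_three]
    have h3 : κ * |x - (θ + l * (2 * Real.pi)) / κ| ≤ Real.pi / 3 := by
      calc _ ≤ κ * (Real.pi / (3 * κ)) := by gcongr
        _ = _ := by field_simp
    exact Real.cos_le_cos_of_nonneg_of_le_pi (by positivity) (by linarith) h3

/-- If each frequency is at least four times the preceding one, all the phases `κ i * x` can be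
brought within `π / 3` of prescribed values by one `x` (nested intervals). -/
lemma exists_phase (κ θ : ℕ → ℝ) (n : ℕ) (hpos : ∀ i < n, 0 < κ i)
    (h4 : ∀ i, i + 1 < n → 4 * κ i ≤ κ (i + 1)) :
    ∀ p < n, ∃ y, ∀ x, |x - y| ≤ Real.pi / (3 * κ p) →
      ∀ i ≤ p, 1 / 2 ≤ Real.cos (κ i * x - θ i) := by
  intro p
  induction p with
  | zero =>
    intro hp
    obtain ⟨y, -, hy⟩ := exists_phase_one (κ 0) (θ 0) 0 (hpos 0 hp)
    refine ⟨y, fun x hx i hi => ?_⟩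
    obtain rfl : i = 0 := by omega
    exact hy x hx
  | succ p ih =>
    intro hp
    obtain ⟨y, hy⟩ := ih (by omega)
    have hk := hpos p (by omega)
    have hk1 := hpos (p + 1) hp
    obtain ⟨y', hyy, hy'⟩ := exists_phase_one (κ (p + 1)) (θ (p + 1)) y hk1
    refine ⟨y', fun x hx i hi => ?_⟩
    rcases Nat.lt_or_ge p i with hip | hip
    · obtain rfl : i = p + 1 := by omega
      exact hy' x hx
    · refine hy x ?_ i hip
      have h1 : |x - y| ≤ |x - y'| + |y' - y| := abs_sub_le _ _ _
      have h2 : Real.pi / (3 * κ (p + 1)) + Real.pi / κ (p + 1) ≤ Real.pi / (3 * κ p) := by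
        have h3 : Real.pi / (3 * κ (p + 1)) + Real.pi / κ (p + 1) =
            Real.pi / (3 * (κ (p + 1) / 4)) := by field_simp; norm_num
        rw [h3]
        have := Real.pi_pos
        have := h4 p hp
        gcongr
        linarith
      linarith

lemma exp_eq_cos_sin (k : ℕ) (x : ℝ) : Complex.exp (Complex.I * (k : ℂ) * (x : ℂ)) =
    (Real.cos (k * x) : ℂ) + (Real.sin (k * x) : ℂ) * Complex.I := by
  have : Complex.I * (k : ℂ) * (x : ℂ) = ((k * x : ℝ) : ℂ) * Complex.I := by push_cast; ring
  rw [this, Complex.exp_mul_I, Complex.ofReal_cos, Complex.ofReal_sin]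

lemma norm_trig_exp (k : ℕ) (x : ℝ) : ‖Complex.exp (Complex.I * (k : ℂ) * (x : ℂ))‖ = 1 := by
  have : Complex.I * (k : ℂ) * (x : ℂ) = ((k * x : ℝ) : ℂ) * Complex.I := by push_cast; ring
  rw [this, Complex.norm_exp_ofReal_mul_I]

lemma norm_le_iSup {N : ℕ} (k : Fin N → ℕ) (c : Fin N → ℂ) (x : ℝ) :
    ‖∑ j, c j * Complex.exp (Complex.I * (k j : ℂ) * (x : ℂ))‖ ≤
      ⨆ x : ℝ, ‖∑ j, c j * Complex.exp (Complex.I * (k j : ℂ) * (x : ℂ))‖ := by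
  refine le_ciSup (f := fun x : ℝ => ‖∑ j, c j * Complex.exp (Complex.I * (k j : ℂ) * (x : ℂ))‖)
    ⟨∑ j, ‖c j‖, ?_⟩ x
  rintro _ ⟨x, rfl⟩
  refine (norm_sum_le _ _).trans (le_of_eq (Finset.sum_congr rfl fun j _ => ?_))
  rw [norm_mul, norm_trig_exp, mul_one]

lemma coeff_eq_zero {N : ℕ} (k : Fin N → ℕ) (hk : Function.Injective k) (c : Fin N → ℂ)
    (h : ∀ x : ℝ, ∑ j, c j * Complex.exp (Complex.I * (k j : ℂ) * (x : ℂ)) = 0) : c = 0 := by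
  set p : Polynomial ℂ := ∑ j, Polynomial.monomial (k j) (c j) with hp
  have hp0 : p = 0 := by
    refine Polynomial.eq_zero_of_infinite_isRoot p ?_
    refine Set.infinite_of_injOn_mapsTo (s := Set.Ioc (-Real.pi) Real.pi)
      (f := fun x : ℝ => Complex.exp ((x : ℂ) * Complex.I)) ?_ ?_
      (Set.Ioc_infinite (by linarith [Real.pi_pos]))
    · intro x hx y hy hxy
      have h1 := Complex.arg_exp_mul_I x
      have h2 := Complex.arg_exp_mul_I y
      have hx' : toIocMod Real.two_pi_pos (-Real.pi) x = x :=
        (toIocMod_eq_self _).2 ⟨hx.1, by linarith [hx.2]⟩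
      have hy' : toIocMod Real.two_pi_pos (-Real.pi) y = y :=
        (toIocMod_eq_self _).2 ⟨hy.1, by linarith [hy.2]⟩
      rw [hx'] at h1
      rw [hy'] at h2
      rw [← h1, ← h2]
      exact congrArg Complex.arg hxy
    · intro x _
      show p.eval _ = 0
      rw [hp, Polynomial.eval_finsetSum, ← h x]
      refine Finset.sum_congr rfl fun j _ => ?_
      rw [Polynomial.eval_monomial, ← Complex.exp_nat_mul]
      congr 2; ring
  funext j
  have h1 : p.coeff (k j) = c j := by
    rw [hp, Polynomial.finsetSum_coeff]
    simp [Polynomial.coeff_monomial, hk.eq_iff]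
  rw [← h1, hp0]; simp

/-- Fewer than `N` nodes miss some nonzero polynomial. -/
lemma dim_le {N : ℕ} (k : Fin N → ℕ) (hk : Function.Injective k) (m : ℕ) (ξ : Fin m → ℝ) (L : ℝ)
    (h : ∀ c : Fin N → ℂ,
        (⨆ x : ℝ, ‖∑ j, c j * Complex.exp (Complex.I * (k j : ℂ) * (x : ℂ))‖) ≤
          L * ⨆ ν, ‖∑ j, c j * Complex.exp (Complex.I * (k j : ℂ) * (ξ ν : ℂ))‖) : N ≤ m := by
  by_contra! hlt
  let T : (Fin N → ℂ) →ₗ[ℂ] (Fin m → ℂ) :=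
    Matrix.mulVecLin (Matrix.of fun ν j => Complex.exp (Complex.I * (k j : ℂ) * (ξ ν : ℂ)))
  have hT : T.ker ≠ ⊥ := LinearMap.ker_ne_bot_of_finrank_lt (by simpa using hlt)
  obtain ⟨c, hc, hc0⟩ := (Submodule.ne_bot_iff _).1 hT
  have h1 : ∀ ν, ∑ j, c j * Complex.exp (Complex.I * (k j : ℂ) * (ξ ν : ℂ)) = 0 := by
    intro ν
    have h2 := congrFun (LinearMap.mem_ker.1 hc) ν
    simp only [T, Matrix.mulVecLin_apply, Matrix.mulVec, dotProduct, Matrix.of_apply,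
      Pi.zero_apply] at h2
    rw [← h2]
    exact Finset.sum_congr rfl fun j _ => mul_comm _ _
  have h3 := h c
  simp only [h1, norm_zero, Real.iSup_const_zero, mul_zero] at h3
  exact hc0 (coeff_eq_zero k hk c fun x => norm_le_zero_iff.1 ((norm_le_iSup k c x).trans h3))

/-- The logarithmic lower bound, from a subfamily of frequencies growing by factors of at least
four: a partial colouring of the subfamily is small at every node, yet of size comparable to `n`
somewhere by `exists_phase`. The real and imaginary parts at the nodes give `2 m` linear forms. -/
lemma large_ratio_bound {N n : ℕ} (hn : 0 < n) (k : Fin N → ℕ) (φ : Fin n → Fin N)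
    (κ : ℕ → ℝ) (hκ : ∀ i : Fin n, κ i = k (φ i)) (hpos : ∀ i < n, 0 < κ i)
    (h4 : ∀ i, i + 1 < n → 4 * κ i ≤ κ (i + 1))
    (m : ℕ) (hnm : n ≤ m) (ξ : Fin m → ℝ) (L : ℝ)
    (h : ∀ c : Fin N → ℂ,
        (⨆ x : ℝ, ‖∑ j, c j * Complex.exp (Complex.I * (k j : ℂ) * (x : ℂ))‖) ≤
          L * ⨆ ν, ‖∑ j, c j * Complex.exp (Complex.I * (k j : ℂ) * (ξ ν : ℂ))‖) :
    0 < L ∧ (n : ℝ) ≤ 24576 * L ^ 2 * Real.log (128 * m / n) := by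
  have hn' : (0 : ℝ) < n := by exact_mod_cast hn
  let a : Fin m × Bool → Fin n → ℝ := fun v i =>
    if v.2 then Real.cos (k (φ i) * ξ v.1) else Real.sin (k (φ i) * ξ v.1)
  have ha : ∀ v i, |a v i| ≤ 1 := by
    intro v i
    simp only [a]
    split_ifs
    · exact Real.abs_cos_le_one _
    · exact Real.abs_sin_le_one _
  obtain ⟨u, hu1, hu2⟩ := partial_coloring hn (by simp; omega) a ha
  set B := √(6 * n * Real.log (64 * Fintype.card (Fin m × Bool) / n)) with hB
  let c : Fin N → ℂ := fun j => ∑ i, if φ i = j then (u i : ℂ) else 0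
  have hc : ∀ x : ℝ, ∑ j, c j * Complex.exp (Complex.I * (k j : ℂ) * (x : ℂ)) =
      ∑ i, (u i : ℂ) * Complex.exp (Complex.I * (k (φ i) : ℂ) * (x : ℂ)) := by
    intro x
    simp only [c, Finset.sum_mul]
    rw [Finset.sum_comm]
    simp [ite_mul]
  have hre : ∀ x : ℝ, (∑ i, (u i : ℂ) * Complex.exp (Complex.I * (k (φ i) : ℂ) * (x : ℂ))).re =
      ∑ i, u i * Real.cos (k (φ i) * x) := by
    intro x
    rw [Complex.re_sum]
    refine Finset.sum_congr rfl fun i _ => ?_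
    rw [exp_eq_cos_sin, Complex.re_ofReal_mul]
    simp [-Complex.ofReal_cos, -Complex.ofReal_sin, -Complex.ofReal_mul]
  have him : ∀ x : ℝ, (∑ i, (u i : ℂ) * Complex.exp (Complex.I * (k (φ i) : ℂ) * (x : ℂ))).im =
      ∑ i, u i * Real.sin (k (φ i) * x) := by
    intro x
    rw [Complex.im_sum]
    refine Finset.sum_congr rfl fun i _ => ?_
    rw [exp_eq_cos_sin, Complex.im_ofReal_mul]
    simp [-Complex.ofReal_cos, -Complex.ofReal_sin, -Complex.ofReal_mul]
  have hB0 : 0 ≤ B := Real.sqrt_nonneg _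
  have hsmall : (⨆ ν, ‖∑ j, c j * Complex.exp (Complex.I * (k j : ℂ) * (ξ ν : ℂ))‖) ≤ 2 * B := by
    refine Real.iSup_le (fun ν => ?_) (by positivity)
    rw [hc]
    refine (Complex.norm_le_abs_re_add_abs_im _).trans ?_
    rw [hre, him]
    have h1 := hu2 (ν, true)
    have h2 := hu2 (ν, false)
    simp only [a, if_true, Bool.false_eq_true, if_false] at h1 h2
    simp only [mul_comm (u _)]
    linarith
  -- prescribing the phase `0` or `π` according to the sign of `u i`
  have hlarge : (n : ℝ) / 32 ≤
      ⨆ x : ℝ, ‖∑ j, c j * Complex.exp (Complex.I * (k j : ℂ) * (x : ℂ))‖ := by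
    let θ : ℕ → ℝ := fun i => if hi : i < n then (if 0 ≤ u ⟨i, hi⟩ then 0 else Real.pi) else 0
    obtain ⟨x, hx⟩ := exists_phase κ θ n hpos h4 (n - 1) (by omega)
    have hx' := hx x (by
      have := hpos (n - 1) (by omega)
      have := Real.pi_pos
      rw [sub_self, abs_zero]; positivity)
    refine le_trans ?_ (norm_le_iSup k c x)
    rw [hc]
    refine le_trans ?_ (Complex.re_le_norm _)
    rw [hre]
    have h1 : ∑ i, |u i| * (1 / 2) ≤ ∑ i, u i * Real.cos (k (φ i) * x) := by
      refine Finset.sum_le_sum fun i _ => ?_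
      have h2 := hx' i (by omega)
      rw [hκ] at h2
      simp only [θ, i.2, dite_true, Fin.eta] at h2
      split_ifs at h2 with h0
      · rw [abs_of_nonneg h0]
        rw [sub_zero] at h2
        gcongr
      · rw [Real.cos_sub_pi] at h2
        rw [abs_of_neg (not_le.1 h0)]
        nlinarith [not_le.1 h0]
    rw [← Finset.sum_mul] at h1
    linarith
  have hmain := hlarge.trans (h c)
  have hS0 : 0 ≤ ⨆ ν, ‖∑ j, c j * Complex.exp (Complex.I * (k j : ℂ) * (ξ ν : ℂ))‖ :=
    Real.iSup_nonneg fun _ => norm_nonneg _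
  have hL : 0 < L := by
    by_contra! hL
    have := mul_nonpos_of_nonpos_of_nonneg hL hS0
    linarith
  refine ⟨hL, ?_⟩
  have h1 : (n : ℝ) / 32 ≤ L * (2 * B) := hmain.trans (by gcongr)
  have hlog : 0 ≤ Real.log (128 * m / n) := by
    refine Real.log_nonneg ?_
    have : (n : ℝ) ≤ m := by exact_mod_cast hnm
    rw [le_div_iff₀ hn']; linarith
  have hB2 : B ^ 2 = 6 * n * Real.log (128 * m / n) := by
    have hcard : 64 * ((Fintype.card (Fin m × Bool) : ℕ) : ℝ) / n = 128 * m / n := by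
      simp; ring
    rw [hB, hcard]
    exact Real.sq_sqrt (by positivity)
  have h2 : ((n : ℝ) / 32) ^ 2 ≤ (L * (2 * B)) ^ 2 := by gcongr
  rw [mul_pow, mul_pow, hB2] at h2
  refine le_of_mul_le_mul_left ?_ hn'
  nlinarith

/-! ### The lower bound -/

/-- **Theorem lbT1** (from \cite{VT168}, \cite{DPTT}): a lower bound on the number of
points needed for one-sided `L_∞` discretization of lacunary trigonometric polynomials.
Here `𝕋` is modeled by `ℝ` with `2π`-periodic trigonometric polynomials
`x ↦ ∑_j c_j e^{i k_j x}`. -/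
theorem statement14 :
    ∀ b : ℝ, 1 < b →
    ∃ C : ℝ, 0 < C ∧
    ∀ (N : ℕ) (hN : 0 < N) (k : Fin N → ℕ),
      k ⟨0, hN⟩ = 1 →
      (∀ (j : ℕ) (hj : j + 1 < N),
        b * (k ⟨j, Nat.lt_of_succ_lt hj⟩ : ℝ) ≤ (k ⟨j + 1, hj⟩ : ℝ)) →
    ∀ (m : ℕ) (ξ : Fin m → ℝ) (L : ℝ),
      (∀ c : Fin N → ℂ,
        (⨆ x : ℝ, ‖∑ j, c j * Complex.exp (Complex.I * (k j : ℂ) * (x : ℂ))‖) ≤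
          L * ⨆ ν, ‖∑ j, c j * Complex.exp (Complex.I * (k j : ℂ) * (ξ ν : ℂ))‖) →
      (N : ℝ) / Real.exp 1 * Real.exp (C * N / L ^ 2) ≤ (m : ℝ) := by
  intro b hb
  obtain ⟨r₀, hr₀⟩ := pow_unbounded_of_one_lt 4 hb
  -- passing to every `r`-th frequency makes the ratio at least four
  set r := r₀ + 1 with hr
  have hbr : 4 ≤ b ^ r := by
    have : b ^ r₀ ≤ b ^ r := pow_le_pow_right₀ hb.le (by omega)
    linarith
  have hr1 : (1 : ℝ) ≤ r := by rw [hr]; push_cast; linarith [Nat.cast_nonneg (α := ℝ) r₀]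
  have hlogr : 1 ≤ Real.log (128 * r) := by
    rw [Real.le_log_iff_exp_le (by positivity)]
    linarith [Real.exp_one_lt_d9]
  refine ⟨1 / (24576 * r * Real.log (128 * r)), by positivity, ?_⟩
  intro N hN k hk0 hkb m ξ L h
  have hgrow : ∀ d j (hj : j + d < N),
      b ^ d * (k ⟨j, by omega⟩ : ℝ) ≤ (k ⟨j + d, hj⟩ : ℝ) := by
    intro d
    induction d with
    | zero => intro j hj; simp
    | succ d ih =>
      intro j hj
      have h1 := ih j (by omega)
      have h2 := hkb (j + d) hj
      calc b ^ (d + 1) * (k ⟨j, by omega⟩ : ℝ) = b * (b ^ d * (k ⟨j, by omega⟩ : ℝ)) := by ring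
        _ ≤ b * (k ⟨j + d, by omega⟩ : ℝ) := by gcongr
        _ ≤ _ := h2
  have hkpos : ∀ j : Fin N, (0 : ℝ) < k j := by
    intro j
    have h1 := hgrow j 0 (by omega)
    rw [hk0] at h1
    have h2 : 0 < b ^ (j : ℕ) := by positivity
    simp only [zero_add, Fin.eta] at h1
    push_cast at h1
    linarith
  have hlt : ∀ i j : Fin N, i < j → (k i : ℝ) < k j := by
    intro i j hij
    obtain ⟨d, hd⟩ := Nat.exists_eq_add_of_lt (Fin.lt_def.1 hij)
    have h1 := hgrow (d + 1) i (by omega)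
    have h2 : (⟨(i : ℕ) + (d + 1), by omega⟩ : Fin N) = j := Fin.ext (by simp; omega)
    rw [h2] at h1
    have h3 : 1 < b ^ (d + 1) := one_lt_pow₀ hb (by omega)
    have h4 := hkpos i
    simp only [Fin.eta] at h1
    nlinarith
  have hinj : Function.Injective k := by
    intro i j hij
    rcases lt_trichotomy i j with h1 | h1 | h1
    · have := hlt i j h1; rw [hij] at this; exact absurd this (lt_irrefl _)
    · exact h1
    · have := hlt j i h1; rw [hij] at this; exact absurd this (lt_irrefl _)
  have hNm := dim_le k hinj m ξ L h
  set n := (N - 1) / r + 1 with hn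
  have hrpos : 0 < r := by omega
  have hidx : ∀ i, i < n → r * i < N := by
    intro i hi
    have h1 : i ≤ (N - 1) / r := by omega
    have h2 := (Nat.le_div_iff_mul_le hrpos).1 h1
    rw [mul_comm] at h2
    omega
  have hnN : n ≤ N := by
    have := Nat.div_le_self (N - 1) r
    omega
  have hNrn : N ≤ r * n := by
    have := Nat.lt_mul_div_succ (N - 1) hrpos
    rw [← hn] at this
    omega
  obtain ⟨hL, hbound⟩ := large_ratio_bound (n := n) (Nat.succ_pos _) k
    (fun i => ⟨r * i, hidx i i.2⟩)
    (fun i => if hi : r * i < N then (k ⟨r * i, hi⟩ : ℝ) else 0)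
    (fun i => by simp only [hidx i i.2, dite_true])
    (fun i hi => by simp only [hidx i hi, dite_true]; exact hkpos _)
    (fun i hi => by
      simp only [hidx i (by omega), hidx (i + 1) hi, dite_true]
      have h1 := hgrow r (r * i) (hidx (i + 1) hi)
      have h2 := hkpos ⟨r * i, hidx i (by omega)⟩
      have h3 : 4 * (k ⟨r * i, hidx i (by omega)⟩ : ℝ) ≤
          b ^ r * (k ⟨r * i, hidx i (by omega)⟩ : ℝ) := by gcongr
      exact h3.trans h1)
    m (hnN.trans hNm) ξ L h
  have hN' : (0 : ℝ) < N := by exact_mod_cast hN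
  have hNm' : (N : ℝ) ≤ m := by exact_mod_cast hNm
  have hm' : (0 : ℝ) < m := by linarith
  have hn' : (0 : ℝ) < n := by exact_mod_cast Nat.succ_pos _
  have hNrn' : (N : ℝ) ≤ r * n := by exact_mod_cast hNrn
  have hlogm : 0 ≤ Real.log (m / N) := Real.log_nonneg (by rw [le_div_iff₀ hN']; linarith)
  have h1 : Real.log (128 * m / n) ≤ Real.log (128 * r) + Real.log (m / N) := by
    rw [← Real.log_mul (by positivity) (by positivity)]
    refine Real.log_le_log (by positivity) ?_
    rw [mul_div_assoc', div_le_div_iff₀ hn' hN']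
    nlinarith
  have h2 : Real.log (128 * m / n) ≤ Real.log (128 * r) * (1 + Real.log (m / N)) := by
    nlinarith
  have h3 : (N : ℝ) ≤ (24576 * r * Real.log (128 * r)) * L ^ 2 * (1 + Real.log (m / N)) := by
    calc (N : ℝ) ≤ r * n := hNrn'
      _ ≤ r * (24576 * L ^ 2 * (Real.log (128 * r) * (1 + Real.log (m / N)))) := by
          refine mul_le_mul_of_nonneg_left (hbound.trans ?_) (by linarith)
          gcongr
      _ = _ := by ring
  have h4 : 1 / (24576 * r * Real.log (128 * r)) * N / L ^ 2 ≤ 1 + Real.log (m / N) := by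
    rw [div_le_iff₀ (by positivity), one_div, inv_mul_le_iff₀ (by positivity)]
    linarith
  calc (N : ℝ) / Real.exp 1 * Real.exp (1 / (24576 * r * Real.log (128 * r)) * N / L ^ 2)
      ≤ N / Real.exp 1 * Real.exp (1 + Real.log (m / N)) := by gcongr
    _ = m := by
        rw [Real.exp_add, Real.exp_log (by positivity)]
        field_simp

end
end
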